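/- Let γ ∈ [1/2, 1) and β ≥ 2, and let ρ ∈ (0,1) be the unique solution of 1 − ρ = e^{−βρ}. Then I(β) = ∫_0^1 x^{−2γ} (1−ρ)^{(1/(1−γ) − 1 + γ)·x^{−γ}} dx < 1. -/

import Mathlib

noncomputable section

/-- `I = ∫_0^1 x^{−2γ} (1−ρ)^{(1/(1−γ) − 1 + γ)·x^{−γ}} dx`. -/
def snrIntegral (γ ρ : ℝ) : ℝ :=
  ∫ x in Set.Ioc (0 : ℝ) 1,
    x ^ (-(2 * γ)) * (1 - ρ) ^ ((1 / (1 - γ) - 1 + γ) * x ^ (-γ))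

/-- For `γ ∈ [1/2,1)`, `β ≥ 2` and `ρ ∈ (0,1)` the unique solution of
`1 − ρ = e^{−βρ}`, the integral `I(β)` is less than `1`. -/
theorem snrIntegral_lt_one_of_two_le
    (γ β ρ : ℝ) (hγ : γ ∈ Set.Ico (1 / 2 : ℝ) 1) (hβ : 2 ≤ β)
    (hρ : ρ ∈ Set.Ioo (0 : ℝ) 1) (hfix : 1 - ρ = Real.exp (-(β * ρ))) :
    snrIntegral γ ρ < 1 := by
  obtain ⟨h1, h2⟩ := hγ
  obtain ⟨r0, r1⟩ := hρ
  have hc : 4 / 3 ≤ β * ρ := by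
    have e1 : 1 + 2 * ρ + (2 * ρ) ^ 2 / 2 ≤ Real.exp (2 * ρ) :=
      Real.quadratic_le_exp_of_nonneg (by linarith)
    have e2 : Real.exp (2 * ρ) ≤ Real.exp (β * ρ) := Real.exp_le_exp.2 (by nlinarith)
    have e3 : (1 - ρ) * Real.exp (β * ρ) = 1 := by
      rw [hfix, ← Real.exp_add]; simp
    have e4 : (1 - ρ) * (1 + 2 * ρ + (2 * ρ) ^ 2 / 2) ≤ 1 := by
      have := mul_le_mul_of_nonneg_left (e1.trans e2) (sub_nonneg.2 r1.le)
      linarith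
    have e5 : 1 / 2 ≤ ρ ^ 2 := by
      by_contra! h
      nlinarith
    have e6 : 2 / 3 ≤ ρ := by nlinarith
    nlinarith
  have ha : 3 / 2 ≤ 1 / (1 - γ) - 1 + γ := by
    have : 2 ≤ 1 / (1 - γ) := by
      rw [le_div_iff₀ (by linarith)]; linarith
    linarith
  unfold snrIntegral
  set a := 1 / (1 - γ) - 1 + γ
  have hK : 2 ≤ β * ρ * a := by nlinarith
  have key : ∀ x ∈ Set.Ioc (0 : ℝ) 1,
      ‖x ^ (-(2 * γ)) * (1 - ρ) ^ (a * x ^ (-γ))‖ ≤ Real.exp (-2) := by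
    intro x hx
    have ht : 1 ≤ x ^ (-γ) :=
      Real.one_le_rpow_of_pos_of_le_one_of_nonpos hx.1 hx.2 (by linarith)
    have hsq : x ^ (-(2 * γ)) = x ^ (-γ) * x ^ (-γ) := by
      rw [← Real.rpow_add hx.1]; congr 1; ring
    rw [hsq, hfix, ← Real.exp_mul]
    set t := x ^ (-γ)
    have b1 : t ≤ Real.exp (t - 1) := by linarith [Real.add_one_le_exp (t - 1)]
    have b2 : t * t ≤ Real.exp (t - 1) * Real.exp (t - 1) :=
      mul_le_mul b1 b1 (by linarith) (Real.exp_pos _).le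
    rw [Real.norm_of_nonneg (by positivity)]
    calc _ ≤ Real.exp (t - 1) * Real.exp (t - 1) * Real.exp (-(β * ρ) * (a * t)) :=
          mul_le_mul_of_nonneg_right b2 (Real.exp_pos _).le
      _ = Real.exp (t - 1 + (t - 1) + -(β * ρ) * (a * t)) := by
          rw [Real.exp_add, Real.exp_add]
      _ ≤ _ := Real.exp_le_exp.2 (by nlinarith)
  have hb := MeasureTheory.norm_setIntegral_le_of_norm_le_const
    (μ := MeasureTheory.volume) (s := Set.Ioc (0 : ℝ) 1) (by simp) key
  have hv : MeasureTheory.volume.real (Set.Ioc (0 : ℝ) 1) = 1 := by simp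
  rw [hv, mul_one] at hb
  exact lt_of_le_of_lt ((le_abs_self _).trans hb) (Real.exp_lt_one_iff.2 (by norm_num))
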